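/- Let α ∈ C_loc^log and q ∈ 𝒫^log with 1 < q⁻ ≤ q⁺ < ∞. There is a constant c > 0 such that for every double sequence of complex numbers λ = {λ_{v,m}}_{v∈ℕ₀,m∈ℤⁿ} and every constant C ≥ 0 the following holds: if |Σ_{v,m} s_{v,m} conj(λ_{v,m})| ≤ C ‖s‖_{f^{α(·)}_{1,q(·)}} for every finitely supported double sequence of complex numbers s = {s_{v,m}}_{v∈ℕ₀,m∈ℤⁿ}, then ‖λ‖_{b̃^{−α(·),q'(·)}_{q'(·),q'(·)}} ≤ c C. -/

import Mathlib

/-!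
The proof is by duality, one dyadic cube `P` at a time.

Pick in every cube `Q = Q_{v,m}` a point `z_Q` where the bounds on `q` hold. Local log-Hölder
continuity gives `v |g(x) - g(y)| ≤ D` for `x, y ∈ Q` and `g = α`, `g = 1 / q`
(`exists_osc_bound`), hence also for `g = q` and `g = q'` with other constants. So
`2 ^ (v α(x))` may be replaced by `2 ^ (v α(z_Q))` on `Q`, and, if `2 ^ (-v) ≤ T ≤ 1`, exponents
of `T` may be frozen at `z_Q` (`rpow_le_of_exponent_close`).

Put `T_Q = 2 ^ (v (-α(z_Q) + n / 2)) |lam_Q| / C0`, where `C0` is a large multiple of `C`. Testing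
the hypothesis with one nonzero entry gives `T_Q ≤ 1`. Fix `P` and let `J` be the sum of
`|P|⁻¹ |Q| T_Q ^ q'(z_Q)` over a finite set of cubes `Q ⊆ P` with `T_Q ≥ 2 ^ (-v)`. Test with `s_Q`
of the phase of `lam_Q` and of size
`|P|⁻¹ 2 ^ (-v (α(z_Q) + n / 2)) T_Q ^ (q'(z_Q) - 1)`. The pairing is `C0 J`. As
`(q'(z_Q) - 1) q(z_Q) = q'(z_Q)`, the `f`-norm of `s` is at most
`K |P|⁻¹ ∫_P (∑ T_Q ^ q'(z_Q) χ_Q) ^ (1 / q(x)) dx ≤ K (1 + J)`, by `Y ^ (1 / q) ≤ 1 + Y`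
(`fNorm_le`, `duality_bound`). Since `C0 ≥ 2 K C` this yields `2 J ≤ 1 + J`, so `J ≤ 1`.

The cubes with `T_Q < 2 ^ (-v)` contribute at most `∑ 2 ^ (-v) = 2` to the modular, because the
cubes of one generation are disjoint. Altogether the modular is bounded by a constant, and
enlarging the divisor makes it at most `1` (`btNorm_le_of_duality`).
-/

noncomputable section
open MeasureTheory ENNReal Set
open scoped ENNReal

abbrev Rn (n : ℕ) := EuclideanSpace ℝ (Fin n)

/-- The dyadic cube `Q_{v,m}` (with `v ∈ ℕ₀`, so `|Q_{v,m}| = 2^{-vn} ≤ 1`). -/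
def dyadicCube (n : ℕ) (v : ℕ) (m : Fin n → ℤ) : Set (Rn n) :=
  {x | ∀ i, (m i : ℝ) ≤ 2 ^ v * x i ∧ 2 ^ v * x i < m i + 1}

/-- The variable-exponent modular `ϱ_{p(·)}`. -/
def modularVE (n : ℕ) (p : Rn n → ℝ) (f : Rn n → ℝ≥0∞) : ℝ≥0∞ :=
  ∫⁻ x, f x ^ p x

/-- The Luxemburg norm `‖·‖_{p(·)}`. -/
def luxNorm (n : ℕ) (p : Rn n → ℝ) (f : Rn n → ℝ≥0∞) : ℝ≥0∞ :=
  sInf {μ : ℝ≥0∞ | 0 < μ ∧ modularVE n p (fun x => f x / μ) ≤ 1}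

/-- Local log-Hölder continuity with constant `c`. -/
def LocLogHolderWith (n : ℕ) (c : ℝ) (g : Rn n → ℝ) : Prop :=
  ∀ x y : Rn n, x ≠ y → |g x - g y| ≤ c / Real.log (Real.exp 1 + 1 / ‖x - y‖)

/-- The log-Hölder decay condition. -/
def LogHolderDecay (n : ℕ) (g : Rn n → ℝ) : Prop :=
  ∃ g_inf c : ℝ, 0 < c ∧ ∀ x : Rn n, |g x - g_inf| ≤ c / Real.log (Real.exp 1 + ‖x‖)

/-- Global log-Hölder continuity. -/
def GlobLogHolder (n : ℕ) (g : Rn n → ℝ) : Prop :=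
  (∃ c : ℝ, 0 < c ∧ LocLogHolderWith n c g) ∧ LogHolderDecay n g

/-- The sequence space norm `‖λ‖_{b̃^{β(·),r(·)}_{r(·),r(·)}}`: the supremum over dyadic
cubes `P = Q_{vP,m0}` with `|P| ≤ 1` of
`‖ x ↦ ( |P|^{-1} Σ_{v≥v_P} Σ_m 2^{v(β(x)+n/2)r(x)} |λ_{v,m}|^{r(x)} χ_{v,m}(x) )^{1/r(x)} χ_P ‖_{r(·)}`;
here `|P|^{-1} = 2^{vP·n}`. -/
def btNorm (n : ℕ) (r β : Rn n → ℝ) (lam : ℕ → (Fin n → ℤ) → ℂ) : ℝ≥0∞ :=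
  ⨆ (vP : ℕ) (m0 : Fin n → ℤ),
    luxNorm n r ((dyadicCube n vP m0).indicator fun x =>
      ((2 : ℝ≥0∞) ^ ((vP : ℝ) * n) *
        ∑' (v : ℕ), ∑' (m : Fin n → ℤ),
          (if vP ≤ v then (1 : ℝ≥0∞) else 0) *
            (2 : ℝ≥0∞) ^ ((v : ℝ) * (β x + n / 2) * r x) *
              ENNReal.ofReal ‖lam v m‖ ^ r x *
                (dyadicCube n v m).indicator (fun _ => (1 : ℝ≥0∞)) x) ^ (1 / r x))

/-- The sequence space norm `‖s‖_{f^{α(·)}_{1,q(·)}}` of a double sequence of complex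
numbers: `∫_{ℝⁿ} ( Σ_{v,m} 2^{v(α(x)+n/2)q(x)} |s_{v,m}|^{q(x)} χ_{v,m}(x) )^{1/q(x)} dx`. -/
def fNorm (n : ℕ) (q α : Rn n → ℝ) (s : ℕ → (Fin n → ℤ) → ℂ) : ℝ≥0∞ :=
  ∫⁻ x, (∑' (v : ℕ), ∑' (m : Fin n → ℤ),
    (2 : ℝ≥0∞) ^ ((v : ℝ) * (α x + n / 2) * q x) *
      ENNReal.ofReal ‖s v m‖ ^ q x *
        (dyadicCube n v m).indicator (fun _ => (1 : ℝ≥0∞)) x) ^ (1 / q x)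

/-! ### Dyadic cubes -/

lemma dyadicCube_eq (n v : ℕ) (m : Fin n → ℤ) :
    dyadicCube n v m = (MeasurableEquiv.toLp 2 (Fin n → ℝ)).symm ⁻¹'
      (Set.univ.pi fun i => Set.Ico ((m i : ℝ) / 2 ^ v) (((m i : ℝ) + 1) / 2 ^ v)) := by
  ext x
  have h2 : (0 : ℝ) < 2 ^ v := by positivity
  simp only [dyadicCube, Set.mem_ofPred_eq, Set.mem_preimage, Set.mem_pi, Set.mem_univ,
    forall_true_left, Set.mem_Ico, div_le_iff₀ h2, lt_div_iff₀ h2, mul_comm _ ((2 : ℝ) ^ v)]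
  rfl

lemma measurableSet_dyadicCube (n v : ℕ) (m : Fin n → ℤ) :
    MeasurableSet (dyadicCube n v m) := by
  rw [dyadicCube_eq]
  exact (MeasurableEquiv.measurable _)
    (MeasurableSet.univ_pi fun i => measurableSet_Ico)

lemma volume_dyadicCube (n v : ℕ) (m : Fin n → ℤ) :
    volume (dyadicCube n v m) = ENNReal.ofReal ((2 : ℝ) ^ (-((v : ℝ) * n))) := by
  rw [dyadicCube_eq, (EuclideanSpace.volume_preserving_symm_measurableEquiv_toLp
    (Fin n)).measure_preimage_equiv, Real.volume_pi_Ico]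
  have h (i : Fin n) : ((m i : ℝ) + 1) / 2 ^ v - (m i : ℝ) / 2 ^ v = (2 : ℝ) ^ (-(v : ℝ)) := by
    rw [Real.rpow_neg (by norm_num), Real.rpow_natCast]
    ring
  simp only [h, Finset.prod_const, Finset.card_univ, Fintype.card_fin]
  rw [← ENNReal.ofReal_pow (by positivity), ← Real.rpow_natCast, ← Real.rpow_mul (by norm_num),
    neg_mul]

lemma dyadicCube_subset {n v w : ℕ} {m k : Fin n → ℤ} (hvw : w ≤ v) {x : Rn n}
    (hx : x ∈ dyadicCube n v m) (hxk : x ∈ dyadicCube n w k) :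
    dyadicCube n v m ⊆ dyadicCube n w k := by
  obtain ⟨d, rfl⟩ := Nat.exists_eq_add_of_le hvw
  have hd : (0 : ℝ) < 2 ^ d := by positivity
  intro y hy i
  obtain ⟨h1, h2⟩ := hx i
  obtain ⟨h3, h4⟩ := hxk i
  obtain ⟨h5, h6⟩ := hy i
  rw [pow_add] at h1 h2 h5 h6
  have e1 : (k i) * 2 ^ d < m i + 1 := by
    have : (k i : ℝ) * 2 ^ d < m i + 1 := by nlinarith
    exact_mod_cast this
  have e2 : m i < (k i + 1) * 2 ^ d := by
    have : (m i : ℝ) < (k i + 1) * 2 ^ d := by nlinarith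
    exact_mod_cast this
  have e3 : (k i : ℝ) * 2 ^ d ≤ m i := by exact_mod_cast Int.lt_add_one_iff.mp e1
  have e4 : (m i : ℝ) + 1 ≤ (k i + 1) * 2 ^ d := by exact_mod_cast e2
  constructor
  · by_contra! h
    nlinarith
  · by_contra! h
    nlinarith

lemma dyadicCube_index_unique {n v : ℕ} {m k : Fin n → ℤ} {x : Rn n}
    (hx : x ∈ dyadicCube n v m) (hxk : x ∈ dyadicCube n v k) : m = k := by
  ext i
  rw [← Int.floor_eq_iff.mpr (hx i), ← Int.floor_eq_iff.mpr (hxk i)]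

/-- The cubes of one generation are disjoint, so their characteristic functions sum to at
most `1`. -/
lemma tsum_indicator_dyadicCube_le_one (n v : ℕ) (x : Rn n) :
    ∑' m : Fin n → ℤ, (dyadicCube n v m).indicator (fun _ => (1 : ℝ≥0∞)) x ≤ 1 := by
  rw [tsum_eq_single (fun i => ⌊2 ^ v * x i⌋)]
  · exact Set.indicator_le_self' (by simp) x
  · intro m hm
    refine Set.indicator_of_notMem (fun hx => hm ?_) _
    ext i
    exact (Int.floor_eq_iff.mpr (hx i)).symm

lemma norm_sub_le_of_mem_dyadicCube {n v : ℕ} {m : Fin n → ℤ} {x y : Rn n}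
    (hx : x ∈ dyadicCube n v m) (hy : y ∈ dyadicCube n v m) :
    2 ^ v * ‖x - y‖ ≤ n := by
  have h2 : (0 : ℝ) < 2 ^ v := by positivity
  have key : ‖(2 : ℝ) ^ v • (x - y)‖ ≤ n := by
    rw [EuclideanSpace.norm_eq, Real.sqrt_le_left (by positivity)]
    have h : ∀ i ∈ Finset.univ, ‖((2 : ℝ) ^ v • (x - y)) i‖ ^ 2 ≤ 1 := by
      intro i _
      obtain ⟨h1, h2⟩ := hx i
      obtain ⟨h3, h4⟩ := hy i
      have : ‖((2 : ℝ) ^ v • (x - y)) i‖ ≤ 1 := by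
        simp only [PiLp.smul_apply, PiLp.sub_apply, smul_eq_mul, Real.norm_eq_abs, abs_le]
        constructor <;> nlinarith
      exact pow_le_one₀ (norm_nonneg _) this
    have := Finset.sum_le_sum h
    simp only [Finset.sum_const, Finset.card_univ, Fintype.card_fin, nsmul_eq_mul, mul_one] at this
    refine this.trans ?_
    exact_mod_cast Nat.le_self_pow (by norm_num) n
  rwa [norm_smul, Real.norm_of_nonneg h2.le] at key

/-! ### Consequences of log-Hölder continuity -/

/-- Local log-Hölder continuity controls the oscillation on a cube of side `2 ^ (-v)` by a
multiple of `1 / v`. -/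
lemma exists_osc_bound {n : ℕ} (hn : 1 ≤ n) {c : ℝ} (hc : 0 < c) {g : Rn n → ℝ}
    (hg : LocLogHolderWith n c g) :
    ∃ D : ℝ, 0 < D ∧ ∀ (v : ℕ) (m : Fin n → ℤ), ∀ x ∈ dyadicCube n v m,
      ∀ y ∈ dyadicCube n v m, v * |g x - g y| ≤ D := by
  have hn' : (1 : ℝ) ≤ n := by exact_mod_cast hn
  have hl2 : 0 < Real.log 2 := Real.log_pos (by norm_num)
  have hln : 0 ≤ Real.log n := Real.log_nonneg hn'
  refine ⟨c * (Real.log n + 1) / Real.log 2, by positivity, ?_⟩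
  intro v m x hx y hy
  rcases eq_or_ne x y with rfl | hxy
  · simp only [sub_self, abs_zero, mul_zero]
    positivity
  have hd : 0 < ‖x - y‖ := norm_pos_iff.mpr (sub_ne_zero.mpr hxy)
  set L := Real.log (Real.exp 1 + 1 / ‖x - y‖) with hL
  have hL1 : 1 ≤ L := by
    rw [hL, Real.le_log_iff_exp_le (by positivity)]
    have : 0 < 1 / ‖x - y‖ := by positivity
    linarith
  have hvL : v * Real.log 2 ≤ (Real.log n + 1) * L := by
    have h1 : (2 : ℝ) ^ v ≤ n * (Real.exp 1 + 1 / ‖x - y‖) := by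
      have h3 : (2 : ℝ) ^ v ≤ n / ‖x - y‖ := by
        rw [le_div_iff₀ hd]
        exact norm_sub_le_of_mem_dyadicCube hx hy
      have h4 : n * (Real.exp 1 + 1 / ‖x - y‖) = n * Real.exp 1 + n / ‖x - y‖ := by ring
      have : 0 < n * Real.exp 1 := by positivity
      linarith
    have h2 := Real.log_le_log (by positivity) h1
    rw [Real.log_pow, Real.log_mul (by positivity) (by positivity), ← hL] at h2
    nlinarith
  have h5 := hg x y hxy
  rw [← hL] at h5
  rw [le_div_iff₀ hl2]
  calc v * |g x - g y| * Real.log 2 = (v * Real.log 2) * |g x - g y| := by ring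
    _ ≤ ((Real.log n + 1) * L) * (c / L) := by gcongr
    _ = c * (Real.log n + 1) := by field_simp

lemma two_rpow_eq (a : ℝ) : (2 : ℝ≥0∞) ^ a = ENNReal.ofReal ((2 : ℝ) ^ a) := by
  rw [← ENNReal.ofReal_rpow_of_pos (by norm_num)]
  simp

/-- If `2 ^ (-v) ≤ T ≤ 1`, then changing the exponent of `T` by `O(1 / v)` costs only a
bounded factor. -/
lemma rpow_le_of_exponent_close {v : ℕ} {T a b d E : ℝ} (hT : (2 : ℝ) ^ (-(v : ℝ)) ≤ T)
    (hT1 : T ≤ 1) (hd : 0 ≤ d) (hab : b - d ≤ a) (hE : v * d ≤ E) :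
    T ^ a ≤ (2 : ℝ) ^ E * T ^ b := by
  have h0 : (0 : ℝ) < 2 ^ (-(v : ℝ)) := by positivity
  have hT0 : 0 < T := h0.trans_le hT
  calc T ^ a ≤ T ^ (-d + b) := Real.rpow_le_rpow_of_exponent_ge hT0 hT1 (by linarith)
    _ = T ^ (-d) * T ^ b := Real.rpow_add hT0 _ _
    _ ≤ (2 : ℝ) ^ E * T ^ b := by
        gcongr
        calc T ^ (-d) ≤ ((2 : ℝ) ^ (-(v : ℝ))) ^ (-d) :=
              Real.rpow_le_rpow_of_nonpos h0 hT (by linarith)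
          _ = (2 : ℝ) ^ (v * d) := by rw [← Real.rpow_mul (by norm_num)]; ring_nf
          _ ≤ 2 ^ E := Real.rpow_le_rpow_of_exponent_le (by norm_num) hE

/-! ### Testing the pairing -/

/-- Upper bound for the `f`-norm of a finite sequence carried by subcubes of `P`. The outer
power `1 / q(x)` is removed by `Y ^ (1 / q) ≤ 1 + Y`. -/
lemma fNorm_le {n : ℕ} {q α : Rn n → ℝ}
    (hq : ∀ᵐ x ∂(volume : Measure (Rn n)), 1 < q x) (z : ℕ → (Fin n → ℤ) → Rn n) {D : ℝ}
    (hαz : ∀ v m, ∀ x ∈ dyadicCube n v m, v * |α x - α (z v m)| ≤ D)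
    (vP : ℕ) (m0 : Fin n → ℤ) (S : Finset (ℕ × (Fin n → ℤ)))
    (hS : ∀ Q ∈ S, dyadicCube n Q.1 Q.2 ⊆ dyadicCube n vP m0)
    (τ w : ℕ × (Fin n → ℤ) → ℝ) (hτ : ∀ Q ∈ S, 0 ≤ τ Q) (hw : ∀ Q ∈ S, 0 ≤ w Q)
    {M : ℝ} (hM : 1 ≤ M)
    (hτw : ∀ᵐ x ∂(volume : Measure (Rn n)), ∀ Q ∈ S, x ∈ dyadicCube n Q.1 Q.2 →
      τ Q ^ q x ≤ M * w Q)
    (s : ℕ → (Fin n → ℤ) → ℂ) (hs0 : ∀ Q : ℕ × (Fin n → ℤ), Q ∉ S → s Q.1 Q.2 = 0)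
    (hs : ∀ Q ∈ S, ‖s Q.1 Q.2‖ ≤
      2 ^ ((vP : ℝ) * n) * 2 ^ (-((Q.1 : ℝ) * (α (z Q.1 Q.2) + n / 2))) * τ Q) :
    fNorm n q α s ≤ ENNReal.ofReal (2 ^ D * M *
      (1 + ∑ Q ∈ S, 2 ^ ((vP : ℝ) * n) * 2 ^ (-((Q.1 : ℝ) * n)) * w Q)) := by
  set B : ℝ := 2 ^ D * 2 ^ ((vP : ℝ) * n) with hB
  have hB0 : 0 < B := by positivity
  set P := dyadicCube n vP m0 with hP
  let H : Rn n → ℝ≥0∞ := fun x => ∑ Q ∈ S,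
    ENNReal.ofReal (w Q) * (dyadicCube n Q.1 Q.2).indicator (fun _ => (1 : ℝ≥0∞)) x
  have hH : Measurable H := by
    refine Finset.measurable_fun_sum _ fun Q _ => ?_
    exact (measurable_const.indicator (measurableSet_dyadicCube _ _ _)).const_mul _
  have hbound : ∀ᵐ x ∂(volume : Measure (Rn n)),
      (∑' (v : ℕ), ∑' (m : Fin n → ℤ),
        (2 : ℝ≥0∞) ^ ((v : ℝ) * (α x + n / 2) * q x) * ENNReal.ofReal ‖s v m‖ ^ q x *
          (dyadicCube n v m).indicator (fun _ => (1 : ℝ≥0∞)) x) ^ (1 / q x) ≤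
      ENNReal.ofReal (B * M) * (P.indicator (fun _ => (1 : ℝ≥0∞)) x + H x) := by
    filter_upwards [hq, hτw] with x hqx hx
    have hq0 : 0 < q x := by linarith
    have hterm : ∀ Q ∈ S, (2 : ℝ≥0∞) ^ ((Q.1 : ℝ) * (α x + n / 2) * q x) *
        ENNReal.ofReal ‖s Q.1 Q.2‖ ^ q x *
          (dyadicCube n Q.1 Q.2).indicator (fun _ => (1 : ℝ≥0∞)) x ≤
        ENNReal.ofReal B ^ q x * (ENNReal.ofReal M * (ENNReal.ofReal (w Q) *
          (dyadicCube n Q.1 Q.2).indicator (fun _ => (1 : ℝ≥0∞)) x)) := by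
      intro Q hQ
      by_cases hxQ : x ∈ dyadicCube n Q.1 Q.2
      · simp only [Set.indicator_of_mem hxQ, mul_one]
        rw [ENNReal.rpow_mul, ← ENNReal.mul_rpow_of_nonneg _ _ hq0.le, two_rpow_eq,
          ← ENNReal.ofReal_mul (by positivity), ← ENNReal.ofReal_mul (by positivity),
          ENNReal.ofReal_rpow_of_nonneg (by positivity) hq0.le,
          ENNReal.ofReal_rpow_of_nonneg (by positivity) hq0.le,
          ← ENNReal.ofReal_mul (by positivity)]
        apply ENNReal.ofReal_le_ofReal
        have h1 : 2 ^ ((Q.1 : ℝ) * (α x + n / 2)) * ‖s Q.1 Q.2‖ ≤ B * τ Q := by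
          calc 2 ^ ((Q.1 : ℝ) * (α x + n / 2)) * ‖s Q.1 Q.2‖
              ≤ 2 ^ ((Q.1 : ℝ) * (α x + n / 2)) * (2 ^ ((vP : ℝ) * n) *
                2 ^ (-((Q.1 : ℝ) * (α (z Q.1 Q.2) + n / 2))) * τ Q) := by
                gcongr; exact hs Q hQ
            _ = 2 ^ ((Q.1 : ℝ) * (α x - α (z Q.1 Q.2))) * 2 ^ ((vP : ℝ) * n) * τ Q := by
                have : (Q.1 : ℝ) * (α x - α (z Q.1 Q.2)) = (Q.1 : ℝ) * (α x + n / 2) +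
                  (-((Q.1 : ℝ) * (α (z Q.1 Q.2) + n / 2))) := by ring
                rw [this, Real.rpow_add (by norm_num)]
                ring
            _ ≤ B * τ Q := by
                have := hτ Q hQ
                rw [hB]
                gcongr
                · norm_num
                · exact (mul_le_mul_of_nonneg_left (le_abs_self _) (by positivity)).trans
                    (hαz Q.1 Q.2 x hxQ)
        calc (2 ^ ((Q.1 : ℝ) * (α x + n / 2)) * ‖s Q.1 Q.2‖) ^ q x ≤ (B * τ Q) ^ q x :=
              Real.rpow_le_rpow (by positivity) h1 hq0.le
          _ = B ^ q x * τ Q ^ q x := Real.mul_rpow hB0.le (hτ Q hQ)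
          _ ≤ B ^ q x * (M * w Q) := by gcongr; exact hx Q hQ hxQ
      · simp [Set.indicator_of_notMem hxQ]
    have hsum : (∑' (v : ℕ), ∑' (m : Fin n → ℤ),
        (2 : ℝ≥0∞) ^ ((v : ℝ) * (α x + n / 2) * q x) * ENNReal.ofReal ‖s v m‖ ^ q x *
          (dyadicCube n v m).indicator (fun _ => (1 : ℝ≥0∞)) x) ≤
        ENNReal.ofReal B ^ q x * (ENNReal.ofReal M * H x) := by
      rw [← ENNReal.tsum_prod (f := fun (v : ℕ) (m : Fin n → ℤ) =>
        (2 : ℝ≥0∞) ^ ((v : ℝ) * (α x + n / 2) * q x) * ENNReal.ofReal ‖s v m‖ ^ q x *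
          (dyadicCube n v m).indicator (fun _ => (1 : ℝ≥0∞)) x), tsum_eq_sum (s := S)]
      · refine (Finset.sum_le_sum hterm).trans ?_
        rw [← Finset.mul_sum, ← Finset.mul_sum]
      · intro Q hQ
        simp [hs0 Q hQ, hq0]
    refine (ENNReal.rpow_le_rpow hsum (by positivity)).trans ?_
    rw [ENNReal.mul_rpow_of_nonneg _ _ (by positivity), ← ENNReal.rpow_mul,
      mul_one_div_cancel hq0.ne', ENNReal.rpow_one, ENNReal.ofReal_mul hB0.le, mul_assoc]
    gcongr
    by_cases hxP : x ∈ P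
    · rw [Set.indicator_of_mem hxP]
      have hM' : 1 ≤ ENNReal.ofReal M := by rwa [ENNReal.one_le_ofReal]
      calc (ENNReal.ofReal M * H x) ^ (1 / q x)
          ≤ (ENNReal.ofReal M * (1 + H x)) ^ (1 / q x) := by
            gcongr
            exact le_add_self
        _ ≤ (ENNReal.ofReal M * (1 + H x)) ^ (1 : ℝ) := by
            apply ENNReal.rpow_le_rpow_of_exponent_le
            · exact one_le_mul hM' le_self_add
            · rw [div_le_one hq0]; exact hqx.le
        _ = _ := ENNReal.rpow_one _
    · have hH0 : H x = 0 := by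
        refine Finset.sum_eq_zero fun Q hQ => ?_
        rw [Set.indicator_of_notMem (fun h => hxP (hS Q hQ h)), mul_zero]
      simp [hH0, hq0]
  refine (lintegral_mono_ae hbound).trans ?_
  have hind : ∀ (v : ℕ) (m : Fin n → ℤ),
      ∫⁻ x, (dyadicCube n v m).indicator (fun _ => (1 : ℝ≥0∞)) x =
        ENNReal.ofReal ((2 : ℝ) ^ (-((v : ℝ) * n))) := by
    intro v m
    rw [lintegral_indicator_const (measurableSet_dyadicCube _ _ _), one_mul, volume_dyadicCube]
  have hmP : Measurable (P.indicator fun _ => (1 : ℝ≥0∞)) :=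
    measurable_const.indicator (measurableSet_dyadicCube _ _ _)
  have hHint : ∫⁻ x, H x = ENNReal.ofReal (∑ Q ∈ S, 2 ^ (-((Q.1 : ℝ) * n)) * w Q) := by
    rw [lintegral_finsetSum, ENNReal.ofReal_sum_of_nonneg]
    · refine Finset.sum_congr rfl fun Q hQ => ?_
      rw [lintegral_const_mul _ (measurable_const.indicator (measurableSet_dyadicCube _ _ _)),
        hind, ← ENNReal.ofReal_mul (hw Q hQ), mul_comm]
    · intro Q hQ
      have := hw Q hQ
      positivity
    · exact fun Q _ => (measurable_const.indicator (measurableSet_dyadicCube _ _ _)).const_mul _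
  have hs0 : 0 ≤ ∑ Q ∈ S, 2 ^ (-((Q.1 : ℝ) * n)) * w Q := by
    refine Finset.sum_nonneg fun Q hQ => ?_
    have := hw Q hQ
    positivity
  rw [lintegral_const_mul _ (by exact hmP.add hH), lintegral_add_left hmP, hind, hHint,
    ← ENNReal.ofReal_add (by positivity) hs0, ← ENNReal.ofReal_mul (by positivity)]
  apply ENNReal.ofReal_le_ofReal
  apply le_of_eq
  have h1 : (2 : ℝ) ^ ((vP : ℝ) * n) * 2 ^ (-((vP : ℝ) * n)) = 1 := by
    rw [← Real.rpow_add (by norm_num)]; simp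
  simp only [mul_assoc]
  rw [← Finset.mul_sum, hB]
  linear_combination (2 : ℝ) ^ D * M * h1

/-- The hypothesis on `lam`, applied to nonnegative coefficients `τ_Q` on subcubes of `P` that
are rotated by the phases of `lam`, in terms of the normalised sizes
`2 ^ (v (-α(z_Q) + n / 2)) |lam_Q|`. -/
lemma duality_bound {n : ℕ} {q α : Rn n → ℝ}
    (hq : ∀ᵐ x ∂(volume : Measure (Rn n)), 1 < q x) (z : ℕ → (Fin n → ℤ) → Rn n) {D : ℝ}
    (hαz : ∀ v m, ∀ x ∈ dyadicCube n v m, v * |α x - α (z v m)| ≤ D)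
    {lam : ℕ → (Fin n → ℤ) → ℂ} {C : ℝ} (hC : 0 ≤ C)
    (hlam : ∀ s : ℕ → (Fin n → ℤ) → ℂ,
          {vm : ℕ × (Fin n → ℤ) | s vm.1 vm.2 ≠ 0}.Finite →
          ENNReal.ofReal ‖∑' vm : ℕ × (Fin n → ℤ),
              s vm.1 vm.2 * (starRingEnd ℂ) (lam vm.1 vm.2)‖ ≤
            ENNReal.ofReal C * fNorm n q α s)
    (vP : ℕ) (m0 : Fin n → ℤ) (S : Finset (ℕ × (Fin n → ℤ)))
    (hS : ∀ Q ∈ S, dyadicCube n Q.1 Q.2 ⊆ dyadicCube n vP m0)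
    (τ w : ℕ × (Fin n → ℤ) → ℝ) (hτ : ∀ Q ∈ S, 0 ≤ τ Q) (hw : ∀ Q ∈ S, 0 ≤ w Q)
    {M : ℝ} (hM : 1 ≤ M)
    (hτw : ∀ᵐ x ∂(volume : Measure (Rn n)), ∀ Q ∈ S, x ∈ dyadicCube n Q.1 Q.2 →
      τ Q ^ q x ≤ M * w Q) :
    ∑ Q ∈ S, 2 ^ ((vP : ℝ) * n) * 2 ^ (-((Q.1 : ℝ) * n)) * τ Q *
        (2 ^ ((Q.1 : ℝ) * (-α (z Q.1 Q.2) + n / 2)) * ‖lam Q.1 Q.2‖) ≤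
      C * (2 ^ D * M * (1 + ∑ Q ∈ S, 2 ^ ((vP : ℝ) * n) * 2 ^ (-((Q.1 : ℝ) * n)) * w Q)) := by
  classical
  let a : ℕ × (Fin n → ℤ) → ℝ := fun Q =>
    2 ^ ((vP : ℝ) * n) * 2 ^ (-((Q.1 : ℝ) * (α (z Q.1 Q.2) + n / 2))) * τ Q
  have ha : ∀ Q ∈ S, 0 ≤ a Q := fun Q hQ => by
    have := hτ Q hQ
    positivity
  let s : ℕ → (Fin n → ℤ) → ℂ := fun v m =>
    if (v, m) ∈ S then (a (v, m) : ℂ) * (lam v m / (‖lam v m‖ : ℂ)) else 0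
  have hs0 : ∀ Q : ℕ × (Fin n → ℤ), Q ∉ S → s Q.1 Q.2 = 0 := fun Q hQ => by simp [s, hQ]
  have hs : ∀ Q ∈ S, ‖s Q.1 Q.2‖ ≤ a Q := by
    intro Q hQ
    simp only [s, Prod.mk.eta, hQ, if_true, norm_mul, norm_div, Complex.norm_real, norm_norm,
      Real.norm_of_nonneg (ha Q hQ)]
    exact mul_le_of_le_one_right (ha Q hQ) (div_self_le_one _)
  have hpair : ∀ Q ∈ S, s Q.1 Q.2 * (starRingEnd ℂ) (lam Q.1 Q.2) =
      ((a Q * ‖lam Q.1 Q.2‖ : ℝ) : ℂ) := by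
    intro Q hQ
    simp only [s, Prod.mk.eta, hQ, if_true]
    rcases eq_or_ne (lam Q.1 Q.2) 0 with h0 | h0
    · simp [h0]
    · have h1 : (‖lam Q.1 Q.2‖ : ℂ) ≠ 0 := by simpa using h0
      have h2 := Complex.mul_conj' (lam Q.1 Q.2)
      push_cast
      field_simp
      linear_combination (a Q : ℂ) * h2
  have hfin : {vm : ℕ × (Fin n → ℤ) | s vm.1 vm.2 ≠ 0}.Finite :=
    S.finite_toSet.subset fun Q hQ => by
      by_contra h
      exact hQ (hs0 Q h)
  have h1 := hlam s hfin
  rw [tsum_eq_sum (s := S) (fun Q hQ => by rw [hs0 Q hQ, zero_mul]),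
    Finset.sum_congr rfl hpair, ← Complex.ofReal_sum, Complex.norm_real,
    Real.norm_of_nonneg (Finset.sum_nonneg fun Q hQ => mul_nonneg (ha Q hQ) (norm_nonneg _))] at h1
  have h2 := h1.trans (mul_le_mul_right (fNorm_le hq z hαz vP m0 S hS τ w hτ hw hM hτw s hs0 hs) _)
  rw [← ENNReal.ofReal_mul hC, ENNReal.ofReal_le_ofReal_iff] at h2
  · refine le_trans (le_of_eq (Finset.sum_congr rfl fun Q _ => ?_)) h2
    have : -((Q.1 : ℝ) * (α (z Q.1 Q.2) + n / 2)) =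
      -((Q.1 : ℝ) * n) + (Q.1 : ℝ) * (-α (z Q.1 Q.2) + n / 2) := by ring
    simp only [a, this]
    rw [Real.rpow_add (by norm_num)]
    ring
  · have : 0 ≤ ∑ Q ∈ S, 2 ^ ((vP : ℝ) * n) * 2 ^ (-((Q.1 : ℝ) * n)) * w Q :=
      Finset.sum_nonneg fun Q hQ => by
        have := hw Q hQ
        positivity
    positivity

/-! ### The modular estimate -/

/-- The quantitative estimate for `C > 0`, with `z v m` a sample point of `Q_{v,m}` and `r = q'`.
The rescaled sizes `T_Q = 2 ^ (v (-α(z_Q) + n / 2)) |lam_Q| / C0` satisfy `T_Q ≤ 1`. In a fixed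
cube `P`, the cubes with `T_Q < 2 ^ (-v)` contribute a geometric series, the others are treated
by duality with `τ_Q = T_Q ^ (r(z_Q) - 1)`. -/
lemma btNorm_le_of_duality {n : ℕ} {q α : Rn n → ℝ} {qm qM D : ℝ} (hqm : 1 < qm)
    (hq : ∀ᵐ x ∂(volume : Measure (Rn n)), qm ≤ q x ∧ q x ≤ qM)
    (z : ℕ → (Fin n → ℤ) → Rn n) (hzQ : ∀ v m, z v m ∈ dyadicCube n v m)
    (hzq : ∀ v m, qm ≤ q (z v m) ∧ q (z v m) ≤ qM)
    (hαD : ∀ (v : ℕ) (m : Fin n → ℤ), ∀ x ∈ dyadicCube n v m,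
      ∀ y ∈ dyadicCube n v m, v * |α x - α y| ≤ D)
    (hqD : ∀ (v : ℕ) (m : Fin n → ℤ), ∀ x ∈ dyadicCube n v m,
      ∀ y ∈ dyadicCube n v m, v * |1 / q x - 1 / q y| ≤ D) (hD : 0 < D)
    {lam : ℕ → (Fin n → ℤ) → ℂ} {C : ℝ} (hC : 0 < C)
    (hlam : ∀ s : ℕ → (Fin n → ℤ) → ℂ,
          {vm : ℕ × (Fin n → ℤ) | s vm.1 vm.2 ≠ 0}.Finite →
          ENNReal.ofReal ‖∑' vm : ℕ × (Fin n → ℤ),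
              s vm.1 vm.2 * (starRingEnd ℂ) (lam vm.1 vm.2)‖ ≤
            ENNReal.ofReal C * fNorm n q α s) {R M M' : ℝ} (hR : R = qm / (qm - 1))
    (hM : M = 2 ^ (R * (qM * qM * D))) (hM' : M' = 2 ^ (R * R * D)) :
    btNorm n (fun x => q x / (q x - 1)) (fun x => -α x) lam ≤
      ENNReal.ofReal (3 * 2 ^ D * M' * (2 * 2 ^ D * M) * C) := by
  classical
  have hqM1 : 1 < qM := by linarith [(hzq 0 0).1, (hzq 0 0).2]
  have hR1 : 1 ≤ R := by rw [hR, le_div_iff₀ (by linarith)]; linarith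
  set r : Rn n → ℝ := fun x => q x / (q x - 1) with hr
  have hrb : ∀ x, qm ≤ q x → 1 ≤ r x ∧ r x ≤ R := by
    intro x hx
    have h1 : 0 < q x - 1 := by linarith
    refine ⟨by rw [hr]; simp only; rw [le_div_iff₀ h1]; linarith, ?_⟩
    rw [hr, hR]
    simp only
    rw [div_le_div_iff₀ h1 (by linarith)]
    nlinarith
  have hM1 : 1 ≤ M := by
    rw [hM]; exact Real.one_le_rpow (by norm_num) (by positivity)
  have hM'1 : 1 ≤ M' := by
    rw [hM']; exact Real.one_le_rpow (by norm_num) (by positivity)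
  have hq1 : ∀ᵐ x ∂(volume : Measure (Rn n)), 1 < q x := by
    filter_upwards [hq] with x hx
    linarith [hx.1]
  have hαz : ∀ v m, ∀ x ∈ dyadicCube n v m, v * |α x - α (z v m)| ≤ D :=
    fun v m x hx => hαD v m x hx _ (hzQ v m)
  -- oscillation of `q` and of `r` on cubes
  have hqosc : ∀ (v : ℕ) (m : Fin n → ℤ), ∀ x ∈ dyadicCube n v m, qm ≤ q x → q x ≤ qM →
      v * |q x - q (z v m)| ≤ qM * qM * D := by
    intro v m x hx h1 h2
    obtain ⟨h3, h4⟩ := hzq v m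
    have hx0 : 0 < q x := by linarith
    have hz0 : 0 < q (z v m) := by linarith
    have e : q x - q (z v m) = -(q x * q (z v m) * (1 / q x - 1 / q (z v m))) := by
      field_simp
      ring
    rw [e, abs_neg, abs_mul, abs_of_pos (by positivity : 0 < q x * q (z v m))]
    calc v * (q x * q (z v m) * |1 / q x - 1 / q (z v m)|)
        = q x * q (z v m) * (v * |1 / q x - 1 / q (z v m)|) := by ring
      _ ≤ qM * qM * D := by
        have := hqD v m x hx _ (hzQ v m)
        gcongr
  have hrosc : ∀ (v : ℕ) (m : Fin n → ℤ), ∀ x ∈ dyadicCube n v m, qm ≤ q x →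
      v * |r x - r (z v m)| ≤ R * R * D := by
    intro v m x hx h1
    obtain ⟨h3, h4⟩ := hzq v m
    obtain ⟨a1, a2⟩ := hrb x h1
    obtain ⟨b1, b2⟩ := hrb _ h3
    have hx0 : 0 < q x := by linarith
    have hz0 : 0 < q (z v m) := by linarith
    have e : r x - r (z v m) = r x * r (z v m) * (1 / q x - 1 / q (z v m)) := by
      have hx1 : q x - 1 ≠ 0 := by linarith
      have hz1 : q (z v m) - 1 ≠ 0 := by linarith
      simp only [hr]
      field_simp
      ring
    rw [e, abs_mul, abs_of_pos (by positivity : 0 < r x * r (z v m))]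
    calc v * (r x * r (z v m) * |1 / q x - 1 / q (z v m)|)
        = r x * r (z v m) * (v * |1 / q x - 1 / q (z v m)|) := by ring
      _ ≤ R * R * D := by
        have := hqD v m x hx _ (hzQ v m)
        gcongr
  set C0 : ℝ := 2 * 2 ^ D * M * C with hC0
  have hC0pos : 0 < C0 := by positivity
  let T : ℕ × (Fin n → ℤ) → ℝ := fun Q =>
    2 ^ ((Q.1 : ℝ) * (-α (z Q.1 Q.2) + n / 2)) * ‖lam Q.1 Q.2‖ / C0
  have hTU : ∀ Q, 2 ^ ((Q.1 : ℝ) * (-α (z Q.1 Q.2) + n / 2)) * ‖lam Q.1 Q.2‖ = C0 * T Q := by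
    intro Q
    simp only [T]
    field_simp
  have hT0 : ∀ Q, 0 ≤ T Q := fun Q => by positivity
  -- testing against a sequence with a single nonzero entry
  have hT1 : ∀ Q, T Q ≤ 1 := by
    intro Q
    have h := duality_bound hq1 z hαz hC.le hlam Q.1 Q.2 {Q} (by simp) (fun _ => 1) (fun _ => 1)
      (by simp) (by simp) (le_refl 1) (by simp)
    have h1 : (2 : ℝ) ^ ((Q.1 : ℝ) * n) * 2 ^ (-((Q.1 : ℝ) * n)) = 1 := by
      rw [← Real.rpow_add (by norm_num)]; simp
    simp only [Finset.sum_singleton, h1, one_mul, mul_one] at h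
    rw [hTU] at h
    have h2 : C0 * T Q ≤ C0 * 1 := by
      refine h.trans ?_
      have : C * 2 ^ D * 2 * 1 ≤ C * 2 ^ D * 2 * M := by gcongr
      rw [hC0]
      linarith
    exact le_of_mul_le_mul_left h2 hC0pos
  unfold btNorm
  refine iSup_le fun vP => iSup_le fun m0 => ?_
  set P := dyadicCube n vP m0 with hP
  let good : ℕ × (Fin n → ℤ) → Prop := fun Q =>
    dyadicCube n Q.1 Q.2 ⊆ P ∧ (2 : ℝ) ^ (-(Q.1 : ℝ)) ≤ T Q
  -- the duality step: with `J` the left side, `2 J ≤ 1 + J`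
  have hJ : ∀ S : Finset (ℕ × (Fin n → ℤ)), (∀ Q ∈ S, good Q) →
      ∑ Q ∈ S, 2 ^ ((vP : ℝ) * n) * 2 ^ (-((Q.1 : ℝ) * n)) * T Q ^ r (z Q.1 Q.2) ≤ 1 := by
    intro S hS
    have hTpos : ∀ Q ∈ S, 0 < T Q := fun Q hQ =>
      lt_of_lt_of_le (by positivity) (hS Q hQ).2
    have h := duality_bound hq1 z hαz hC.le hlam vP m0 S (fun Q hQ => (hS Q hQ).1)
      (fun Q => T Q ^ (r (z Q.1 Q.2) - 1)) (fun Q => T Q ^ r (z Q.1 Q.2))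
      (fun Q _ => Real.rpow_nonneg (hT0 Q) _) (fun Q _ => Real.rpow_nonneg (hT0 Q) _) hM1 (by
        filter_upwards [hq] with x hx Q hQ hxQ
        obtain ⟨b1, b2⟩ := hrb _ (hzq Q.1 Q.2).1
        have hz1 : q (z Q.1 Q.2) - 1 ≠ 0 := by linarith [(hzq Q.1 Q.2).1]
        rw [← Real.rpow_mul (hT0 Q), hM]
        refine rpow_le_of_exponent_close (hS Q hQ).2 (hT1 Q)
          (d := R * |q x - q (z Q.1 Q.2)|) (by positivity) ?_ ?_
        · have e : r (z Q.1 Q.2) = (r (z Q.1 Q.2) - 1) * q (z Q.1 Q.2) := by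
            simp only [hr]
            field_simp
            ring
          have h5 : (r (z Q.1 Q.2) - 1) * |q x - q (z Q.1 Q.2)| ≤
            R * |q x - q (z Q.1 Q.2)| := by gcongr; linarith
          have h6 : (r (z Q.1 Q.2) - 1) * (q (z Q.1 Q.2) - q x) ≤
            (r (z Q.1 Q.2) - 1) * |q x - q (z Q.1 Q.2)| := by
            rw [abs_sub_comm]
            exact mul_le_mul_of_nonneg_left (le_abs_self _) (by linarith)
          linarith
        · have := hqosc Q.1 Q.2 x hxQ hx.1 hx.2
          calc (Q.1 : ℝ) * (R * |q x - q (z Q.1 Q.2)|)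
              = R * (Q.1 * |q x - q (z Q.1 Q.2)|) := by ring
            _ ≤ _ := by gcongr)
    set J := ∑ Q ∈ S, 2 ^ ((vP : ℝ) * n) * 2 ^ (-((Q.1 : ℝ) * n)) * T Q ^ r (z Q.1 Q.2)
    have e : ∑ Q ∈ S, 2 ^ ((vP : ℝ) * n) * 2 ^ (-((Q.1 : ℝ) * n)) * T Q ^ (r (z Q.1 Q.2) - 1) *
        (2 ^ ((Q.1 : ℝ) * (-α (z Q.1 Q.2) + n / 2)) * ‖lam Q.1 Q.2‖) = C0 * J := by
      rw [Finset.mul_sum]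
      refine Finset.sum_congr rfl fun Q hQ => ?_
      rw [hTU, Real.rpow_sub_one (hTpos Q hQ).ne']
      have := (hTpos Q hQ).ne'
      field_simp
    rw [e, hC0] at h
    have h3 : (2 ^ D * M * C) * (2 * J) ≤ (2 ^ D * M * C) * (1 + J) := by linarith
    have := le_of_mul_le_mul_left h3 (by positivity)
    linarith
  let G : ℕ × (Fin n → ℤ) → ℝ≥0∞ := fun Q =>
    if good Q then ENNReal.ofReal (T Q ^ r (z Q.1 Q.2)) else 0
  have hG : ∑' Q : ℕ × (Fin n → ℤ), (2 : ℝ≥0∞) ^ ((vP : ℝ) * n) *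
      (G Q * ENNReal.ofReal ((2 : ℝ) ^ (-((Q.1 : ℝ) * n)))) ≤ 1 := by
    rw [ENNReal.tsum_eq_iSup_sum]
    refine iSup_le fun S => ?_
    have h : (∑ Q ∈ S, if good Q then
        2 ^ ((vP : ℝ) * n) * 2 ^ (-((Q.1 : ℝ) * n)) * T Q ^ r (z Q.1 Q.2) else 0) ≤ 1 := by
      rw [← Finset.sum_filter]
      exact hJ (S.filter good) (fun Q hQ => (Finset.mem_filter.mp hQ).2)
    rw [← ENNReal.ofReal_one]
    refine le_trans (le_of_eq ?_) (ENNReal.ofReal_le_ofReal h)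
    rw [ENNReal.ofReal_sum_of_nonneg]
    · refine Finset.sum_congr rfl fun Q _ => ?_
      by_cases hgQ : good Q
      · simp only [G, hgQ, if_true]
        rw [two_rpow_eq, ← ENNReal.ofReal_mul (Real.rpow_nonneg (hT0 Q) _),
          ← ENNReal.ofReal_mul (by positivity)]
        congr 1
        ring
      · simp [G, hgQ]
    · intro Q _
      have := Real.rpow_nonneg (hT0 Q) (r (z Q.1 Q.2))
      split_ifs <;> positivity
  set A : ℝ := 3 * 2 ^ D * M' with hA
  have hA0 : 0 < A := by positivity
  set μ : ℝ := A * C0 with hμ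
  have hμ0 : 0 < μ := by positivity
  have hμ' : 3 * 2 ^ D * M' * (2 * 2 ^ D * M) * C = μ := by rw [hμ, hA, hC0]; ring
  rw [hμ']
  refine sInf_le ⟨by simpa using hμ0, ?_⟩
  unfold modularVE
  have hbound : ∀ᵐ x ∂(volume : Measure (Rn n)),
      (P.indicator (fun x => ((2 : ℝ≥0∞) ^ ((vP : ℝ) * n) *
        ∑' (v : ℕ), ∑' (m : Fin n → ℤ),
          (if vP ≤ v then (1 : ℝ≥0∞) else 0) *
            (2 : ℝ≥0∞) ^ ((v : ℝ) * (-α x + n / 2) * r x) *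
              ENNReal.ofReal ‖lam v m‖ ^ r x *
                (dyadicCube n v m).indicator (fun _ => (1 : ℝ≥0∞)) x) ^ (1 / r x)) x /
          ENNReal.ofReal μ) ^ r x ≤
      (2 : ℝ≥0∞) ^ ((vP : ℝ) * n) * (ENNReal.ofReal (1 / 3) *
        (2 * P.indicator (fun _ => (1 : ℝ≥0∞)) x + ∑' Q : ℕ × (Fin n → ℤ),
          G Q * (dyadicCube n Q.1 Q.2).indicator (fun _ => (1 : ℝ≥0∞)) x)) := by
    filter_upwards [hq] with x hx
    obtain ⟨a1, a2⟩ := hrb x hx.1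
    have hr0 : 0 < r x := by linarith
    by_cases hxP : x ∈ P
    swap
    · simp [Set.indicator_of_notMem hxP, hr0]
    simp only [Set.indicator_of_mem hxP, mul_one]
    rw [ENNReal.div_rpow_of_nonneg _ _ hr0.le, ← ENNReal.rpow_mul, one_div_mul_cancel hr0.ne',
      ENNReal.rpow_one]
    apply ENNReal.div_le_of_le_mul
    rw [mul_assoc]
    gcongr
    have hterm : ∀ (v : ℕ) (m : Fin n → ℤ), (if vP ≤ v then (1 : ℝ≥0∞) else 0) *
            (2 : ℝ≥0∞) ^ ((v : ℝ) * (-α x + n / 2) * r x) *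
              ENNReal.ofReal ‖lam v m‖ ^ r x *
                (dyadicCube n v m).indicator (fun _ => (1 : ℝ≥0∞)) x ≤
        ENNReal.ofReal (1 / 3) * ENNReal.ofReal μ ^ r x *
          ((2⁻¹) ^ v * (dyadicCube n v m).indicator (fun _ => (1 : ℝ≥0∞)) x +
            G (v, m) * (dyadicCube n v m).indicator (fun _ => (1 : ℝ≥0∞)) x) := by
      intro v m
      by_cases hxQ : x ∈ dyadicCube n v m
      swap
      · simp [Set.indicator_of_notMem hxQ]
      by_cases hv : vP ≤ v
      swap
      · simp [hv]
      have hsub : dyadicCube n v m ⊆ P := dyadicCube_subset hv hxQ hxP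
      simp only [hv, if_true, one_mul, Set.indicator_of_mem hxQ, mul_one]
      set t := T (v, m) with ht
      have ht0 : 0 ≤ t := hT0 _
      have ht1 : t ≤ 1 := hT1 _
      have h2v : ((2 : ℝ≥0∞)⁻¹) ^ v = ENNReal.ofReal ((2 : ℝ) ^ (-(v : ℝ))) := by
        rw [← two_rpow_eq, ENNReal.rpow_neg, ENNReal.rpow_natCast, ENNReal.inv_pow]
      let g : ℝ := if good (v, m) then t ^ r (z v m) else 0
      have hg0 : 0 ≤ g := by
        simp only [g]
        split_ifs
        · positivity
        · exact le_rfl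
      have hGg : G (v, m) = ENNReal.ofReal g := by
        simp only [G, g]
        split_ifs <;> simp [ht]
      rw [h2v, hGg, ENNReal.rpow_mul, ← ENNReal.mul_rpow_of_nonneg _ _ hr0.le, two_rpow_eq,
        ← ENNReal.ofReal_mul (by positivity), ← ENNReal.ofReal_add (by positivity) hg0,
        ENNReal.ofReal_rpow_of_nonneg (by positivity) hr0.le,
        ENNReal.ofReal_rpow_of_nonneg (by positivity) hr0.le,
        ← ENNReal.ofReal_mul (by positivity), ← ENNReal.ofReal_mul (by positivity)]
      apply ENNReal.ofReal_le_ofReal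
      have h1 : 2 ^ ((v : ℝ) * (-α x + n / 2)) * ‖lam v m‖ ≤ μ * (1 / (3 * M') * t) := by
        calc 2 ^ ((v : ℝ) * (-α x + n / 2)) * ‖lam v m‖
            = 2 ^ ((v : ℝ) * (α (z v m) - α x)) *
              (2 ^ ((v : ℝ) * (-α (z v m) + n / 2)) * ‖lam v m‖) := by
              rw [← mul_assoc, ← Real.rpow_add (by norm_num)]
              ring_nf
          _ = 2 ^ ((v : ℝ) * (α (z v m) - α x)) * (C0 * t) := by rw [ht, ← hTU (v, m)]
          _ ≤ 2 ^ D * (C0 * t) := by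
              gcongr
              · norm_num
              · exact (mul_le_mul_of_nonneg_left (le_abs_self _) (by positivity)).trans
                  (hαD v m _ (hzQ v m) x hxQ)
          _ = μ * (1 / (3 * M') * t) := by
              rw [hμ, hA]
              field_simp
      have h2 : t ^ r x ≤ M' * (2 ^ (-(v : ℝ)) + g) := by
        by_cases hgood : (2 : ℝ) ^ (-(v : ℝ)) ≤ t
        · have hgg : good (v, m) := ⟨hsub, hgood⟩
          have h3 : t ^ r x ≤ 2 ^ (R * R * D) * t ^ r (z v m) := by
            refine rpow_le_of_exponent_close hgood ht1 (abs_nonneg (r x - r (z v m))) ?_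
              (hrosc v m x hxQ hx.1)
            linarith [neg_abs_le (r x - r (z v m))]
          simp only [g, hgg, if_true]
          rw [← hM'] at h3
          refine h3.trans ?_
          gcongr
          have : (0 : ℝ) ≤ 2 ^ (-(v : ℝ)) := by positivity
          linarith
        · have h3 : t ^ r x ≤ t := Real.rpow_le_self_of_le_one ht0 ht1 a1
          have h4 : (0 : ℝ) ≤ 2 ^ (-(v : ℝ)) := by positivity
          push Not at hgood
          calc t ^ r x ≤ 1 * (2 ^ (-(v : ℝ)) + g) := by linarith
            _ ≤ _ := by gcongr
      have h3 : (1 / (3 * M')) ^ r x ≤ 1 / (3 * M') :=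
        Real.rpow_le_self_of_le_one (by positivity)
          (by rw [div_le_one (by positivity)]; linarith) a1
      calc (2 ^ ((v : ℝ) * (-α x + n / 2)) * ‖lam v m‖) ^ r x
          ≤ (μ * (1 / (3 * M') * t)) ^ r x := Real.rpow_le_rpow (by positivity) h1 hr0.le
        _ = μ ^ r x * ((1 / (3 * M')) ^ r x * t ^ r x) := by
            rw [Real.mul_rpow hμ0.le (by positivity),
              Real.mul_rpow (x := 1 / (3 * M')) (by positivity) ht0]
        _ ≤ μ ^ r x * (1 / (3 * M') * (M' * (2 ^ (-(v : ℝ)) + g))) := by gcongr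
        _ = _ := by field_simp
    refine (ENNReal.tsum_le_tsum fun v => ENNReal.tsum_le_tsum fun m => hterm v m).trans ?_
    simp only [ENNReal.tsum_mul_left, ENNReal.tsum_add]
    rw [mul_right_comm]
    gcongr
    · refine (ENNReal.tsum_le_tsum fun v =>
        mul_le_mul_right (tsum_indicator_dyadicCube_le_one n v x) _).trans ?_
      simp only [mul_one]
      exact ENNReal.tsum_geometric_two.le
    · rw [ENNReal.tsum_prod (f := fun (v : ℕ) (m : Fin n → ℤ) =>
        G (v, m) * (dyadicCube n v m).indicator (fun _ => (1 : ℝ≥0∞)) x)]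
  refine (lintegral_mono_ae hbound).trans ?_
  have hmQ : ∀ (v : ℕ) (m : Fin n → ℤ),
      Measurable ((dyadicCube n v m).indicator fun _ => (1 : ℝ≥0∞)) := fun v m =>
    measurable_const.indicator (measurableSet_dyadicCube _ _ _)
  have hind : ∀ (v : ℕ) (m : Fin n → ℤ),
      ∫⁻ x, (dyadicCube n v m).indicator (fun _ => (1 : ℝ≥0∞)) x =
        ENNReal.ofReal ((2 : ℝ) ^ (-((v : ℝ) * n))) := by
    intro v m
    rw [lintegral_indicator_const (measurableSet_dyadicCube _ _ _), one_mul, volume_dyadicCube]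
  have hmS : Measurable fun x => ∑' Q : ℕ × (Fin n → ℤ),
      G Q * (dyadicCube n Q.1 Q.2).indicator (fun _ => (1 : ℝ≥0∞)) x :=
    Measurable.tsum fun Q => (hmQ _ _).const_mul _
  have hmP : Measurable fun x => 2 * P.indicator (fun _ => (1 : ℝ≥0∞)) x :=
    (hmQ _ _).const_mul _
  rw [lintegral_const_mul _ (by exact (hmP.add hmS).const_mul _),
    lintegral_const_mul _ (by exact hmP.add hmS),
    lintegral_add_left hmP, lintegral_const_mul _ (hmQ _ _), hind,
    lintegral_tsum (fun Q => ((hmQ _ _).const_mul _).aemeasurable)]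
  simp only [lintegral_const_mul _ (hmQ _ _), hind]
  rw [mul_left_comm, mul_add]
  rw [ENNReal.tsum_mul_left] at hG
  have h1 : (2 : ℝ≥0∞) ^ ((vP : ℝ) * n) *
      (2 * ENNReal.ofReal ((2 : ℝ) ^ (-((vP : ℝ) * n)))) = 2 := by
    rw [mul_left_comm, two_rpow_eq, ← ENNReal.ofReal_mul (by positivity),
      ← Real.rpow_add (by norm_num)]
    simp
  rw [h1]
  calc _ ≤ ENNReal.ofReal (1 / 3) * (2 + 1) := by gcongr
    _ = ENNReal.ofReal (1 / 3) * ENNReal.ofReal 3 := by norm_num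
    _ ≤ 1 := by rw [← ENNReal.ofReal_mul (by norm_num)]; norm_num

/-- for `α ∈ C_loc^log` and `q ∈ 𝒫^log` with `1 < q⁻ ≤ q⁺ < ∞`, there is
`c > 0` such that: if `λ` and `C ≥ 0` satisfy
`|Σ_{v,m} s_{v,m} conj(λ_{v,m})| ≤ C ‖s‖_{f^{α(·)}_{1,q(·)}}` for every finitely supported
double sequence `s`, then `‖λ‖_{b̃^{-α(·),q'(·)}_{q'(·),q'(·)}} ≤ c·C`. -/
theorem statement13 (n : ℕ) (hn : 1 ≤ n) (q α : Rn n → ℝ)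
    (hqmeas : Measurable q) (hαmeas : Measurable α)
    (hα : ∃ c : ℝ, 0 < c ∧ LocLogHolderWith n c α)
    (hq1 : ∀ x, 1 ≤ q x)
    (hqlog : GlobLogHolder n fun x => 1 / q x)
    (qm qM : ℝ) (hqm : 1 < qm)
    (hq : ∀ᵐ x ∂(volume : Measure (Rn n)), qm ≤ q x ∧ q x ≤ qM) :
    ∃ c : ℝ, 0 < c ∧
      ∀ (lam : ℕ → (Fin n → ℤ) → ℂ) (C : ℝ), 0 ≤ C →
        (∀ s : ℕ → (Fin n → ℤ) → ℂ,
          {vm : ℕ × (Fin n → ℤ) | s vm.1 vm.2 ≠ 0}.Finite →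
          ENNReal.ofReal ‖∑' vm : ℕ × (Fin n → ℤ),
              s vm.1 vm.2 * (starRingEnd ℂ) (lam vm.1 vm.2)‖ ≤
            ENNReal.ofReal C * fNorm n q α s) →
        btNorm n (fun x => q x / (q x - 1)) (fun x => -α x) lam ≤
          ENNReal.ofReal (c * C) := by
  obtain ⟨cα, hcα, hα⟩ := hα
  obtain ⟨⟨cq, hcq, hqloc⟩, -⟩ := hqlog
  obtain ⟨D₁, hD₁, hosc₁⟩ := exists_osc_bound hn hcα hα
  obtain ⟨D₂, hD₂, hosc₂⟩ := exists_osc_bound hn hcq hqloc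
  -- each cube has positive measure, hence contains a point where the bounds on `q` hold
  have hz : ∀ (v : ℕ) (m : Fin n → ℤ), ∃ x ∈ dyadicCube n v m, qm ≤ q x ∧ q x ≤ qM := by
    intro v m
    by_contra! h
    have h0 : volume (dyadicCube n v m) = 0 :=
      measure_mono_null (t := {x | ¬(qm ≤ q x ∧ q x ≤ qM)})
        (fun x hx hx' => absurd hx'.2 (not_le.mpr (h x hx hx'.1))) (ae_iff.mp hq)
    rw [volume_dyadicCube, ENNReal.ofReal_eq_zero] at h0
    exact absurd h0 (not_le.mpr (by positivity))
  choose z hzQ hzq using hz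
  set D := max D₁ D₂
  set R := qm / (qm - 1) with hR
  set M : ℝ := 2 ^ (R * (qM * qM * D)) with hM
  set M' : ℝ := 2 ^ (R * R * D) with hM'
  set c : ℝ := 3 * 2 ^ D * M' * (2 * 2 ^ D * M) with hc
  have hc0 : 0 < c := by positivity
  refine ⟨c, hc0, fun lam C hC hlam => ?_⟩
  -- enlarging `C` slightly makes it positive
  refine ENNReal.le_of_forall_pos_le_add fun ε hε _ => ?_
  have hε' : (0 : ℝ) < ε := hε
  have hCε : 0 < C + ε / c := by positivity
  have h := btNorm_le_of_duality hqm hq z hzQ hzq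
    (fun v m x hx y hy => (hosc₁ v m x hx y hy).trans (le_max_left D₁ D₂))
    (fun v m x hx y hy => (hosc₂ v m x hx y hy).trans (le_max_right D₁ D₂))
    (lt_max_of_lt_left hD₁) hCε
    (fun s hs => (hlam s hs).trans (by
      gcongr
      have : 0 < ε / c := by positivity
      linarith)) hR hM hM'
  refine h.trans (le_of_eq ?_)
  rw [← hc, mul_add, mul_div_cancel₀ _ hc0.ne', ENNReal.ofReal_add (by positivity) hε'.le,
    ENNReal.ofReal_coe_nnreal]

end
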